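/- Let b > 0 and let u be a real function that is positive on (0,b), C² on (0,b), and C¹ on [0,b], with u(0) = u'(0) = u(b) = 0. Let a ∈ (0,b) be the first point where u achieves its maximum over [0,b] (i.e., u(a) = max u on [0,b] and u(t) < u(a) for 0 ≤ t < a), and assume u'(t) > 0 for all t ∈ (0,a). Assume that whenever u(t) = u(s) with 0 < t < s < b, one has u''(t) ≤ u''(s). Then u is symmetric about b/2, i.e., u(t) = u(b − t) for all t ∈ [0,b], and u(t) = u(a) for all t ∈ [a, b − a]. -/

import Mathlib

/-!
Put `v = u'` and `w = u''`, and let `x s` be the point of the increasing branch `[0, a]` at the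
level `u s`. The energy defect `E s = v s ^ 2 - v (x s) ^ 2` has derivative
`2 * v s * (w s - w (x s))`, whose last factor is nonnegative by hypothesis, so `E` decreases
where `u` does. To the right of the last maximum `c` of `u` the function might oscillate; but `E` is
still nonincreasing along the points `s` at which `u` attains its maximum over `[s, b]`. As
`0 ≤ E b`, we get `0 ≤ E s` at all those points, whereas `E s < 0` at a critical point below the
maximum. Hence `u` decreases on `[c, b]`, where `E` is squeezed between `E c = 0` and `0 ≤ E b`. So
`E = 0` there, which makes `s + x s` constant and forces equality in the comparison of second
derivatives. This equality passes to `[a, c]`, where `E = 0` again excludes a minimum of `u` below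
the level `u a`.
-/

open Set Filter Topology Function

section Calculus

theorem continuousOn_image_of_leftInvOn {X Y : Type*} [TopologicalSpace X] [TopologicalSpace Y]
    [T2Space Y] {K : Set X} {f : X → Y} {g : Y → X} (hK : IsCompact K) (hf : ContinuousOn f K)
    (hg : LeftInvOn g f K) : ContinuousOn g (f '' K) := by
  refine continuousOn_iff_isClosed.2 fun t ht => ⟨f '' (K ∩ t), ?_, ?_⟩
  · exact ((hK.inter_right ht).image_of_continuousOn (hf.mono inter_subset_left)).isClosed
  · rw [inter_eq_left.2 (image_mono inter_subset_left), inter_comm K t, hg.image_inter']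

variable {f : ℝ → ℝ} {f' x y : ℝ}

theorem eventually_lt_of_hasDerivWithinAt_neg (hf : HasDerivWithinAt f f' (Ioi x) x)
    (hf' : f' < 0) : ∀ᶠ z in 𝓝[>] x, f z < f x := by
  filter_upwards [hf.limsup_slope_le' self_notMem_Ioi hf', self_mem_nhdsWithin] with z hslope hz
  rw [slope_def_field, div_lt_iff₀ (sub_pos.2 hz)] at hslope
  linarith

theorem nonpos_of_hasDerivWithinAt_of_isMaxOn (hf : HasDerivWithinAt f f' (Ioi x) x)
    (hxy : x < y) (hmax : IsMaxOn f (Icc x y) x) : f' ≤ 0 := by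
  refine le_of_tendsto ((hasDerivWithinAt_iff_tendsto_slope' self_notMem_Ioi).1 hf) ?_
  filter_upwards [Ioc_mem_nhdsGT hxy] with z hz
  rw [slope_def_field]
  exact div_nonpos_of_nonpos_of_nonneg (sub_nonpos.2 (hmax ⟨hz.1.le, hz.2⟩)) (sub_nonneg.2 hz.1.le)

theorem eq_of_hasDerivAt_zero (hxy : x ≤ y) (hf : ContinuousOn f (Icc x y))
    (hderiv : ∀ z ∈ Ioo x y, HasDerivAt f 0 z) : f x = f y := by
  rcases hxy.eq_or_lt with rfl | hlt
  · rfl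
  obtain ⟨z, -, hslope⟩ := exists_hasDerivAt_eq_slope f (fun _ => 0) hlt hf hderiv
  have := (div_eq_zero_iff.1 hslope.symm).resolve_right (sub_pos.2 hlt).ne'
  linarith

end Calculus

section RightMaxima

variable {u f f' : ℝ → ℝ} {q b d : ℝ}

theorem isClosed_setOf_isMaxOn_Icc (hu : ContinuousOn u (Icc q b)) :
    IsClosed {s ∈ Icc q b | IsMaxOn u (Icc s b) s} := by
  have hset : {s ∈ Icc q b | IsMaxOn u (Icc s b) s} =
      Icc q b ∩ ⋂ r ∈ Icc q b, {s ∈ Icc q b | u (max s r) ≤ u s} := by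
    ext s
    simp only [mem_inter_iff, mem_iInter]
    refine and_congr_right fun hs => ⟨fun hmax r hr => ⟨hs, ?_⟩, fun hmax r hr => ?_⟩
    · exact hmax ⟨le_max_left s r, max_le hs.2 hr.2⟩
    · have hle := (hmax r ⟨hs.1.trans hr.1, hr.2⟩).2
      rwa [max_eq_right hr.1] at hle
  rw [hset]
  refine isClosed_Icc.inter (isClosed_biInter fun r hr => isClosed_Icc.isClosed_le ?_ hu)
  exact hu.comp (by fun_prop) fun s hs => ⟨hs.1.trans (le_max_left s r), max_le hs.2 hr.2⟩

theorem exists_isMaxOn_Icc_mem_Ioo (hqd : q < d) (hdb : d ≤ b) (hu : ContinuousOn u (Icc q b))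
    (hlt : ∀ r ∈ Ioc q b, u r < u q) : ∃ s ∈ Ioo q d, IsMaxOn u (Icc s b) s := by
  obtain ⟨z, hz, hzmax⟩ := isCompact_Icc.exists_isMaxOn (nonempty_Icc.2 hdb)
    (hu.mono (Icc_subset_Icc_left hqd.le))
  have hzq : u z < u q := hlt z ⟨hqd.trans_le hz.1, hz.2⟩
  obtain ⟨p, hp, hzp⟩ : ∃ p ∈ Ioo q d, u z < u p := by
    have hlim : Tendsto u (𝓝[>] q) (𝓝 (u q)) :=
      (hu q (left_mem_Icc.2 (hqd.le.trans hdb))).mono_left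
        (nhdsWithin_le_of_mem (Icc_mem_nhdsGT (hqd.trans_le hdb)))
    exact (Eventually.and (Ioo_mem_nhdsGT hqd) (hlim.eventually_const_lt hzq)).exists
  have hpb : p ≤ b := hp.2.le.trans hdb
  obtain ⟨s, hs, hsmax⟩ := isCompact_Icc.exists_isMaxOn (nonempty_Icc.2 hpb)
    (hu.mono (Icc_subset_Icc_left hp.1.le))
  refine ⟨s, ⟨hp.1.trans_le hs.1, ?_⟩, hsmax.on_subset (Icc_subset_Icc_left hs.1)⟩
  by_contra! hds
  exact ((hzp.trans_le (hsmax (left_mem_Icc.2 hpb))).trans_le (hzmax ⟨hds, hs.2⟩)).false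

theorem le_of_eventually_lt_of_isMaxOn_Icc (hqb : q ≤ b) (hu : ContinuousOn u (Icc q b))
    (hf : ContinuousOn f (Icc q b)) (hq : IsMaxOn u (Icc q b) q)
    (hdecr : ∀ s ∈ Ico q b, IsMaxOn u (Icc s b) s → ∀ᶠ r in 𝓝[>] s, f r < f s)
    (hlevel : ∀ s ∈ Ico q b, IsMaxOn u (Icc s b) s → ∀ r ∈ Ioc s b, u r = u s → f r < f s) :
    f b ≤ f q := by
  have hcompact : IsCompact {s ∈ Icc q b | IsMaxOn u (Icc s b) s} :=
    isCompact_Icc.of_isClosed_subset (isClosed_setOf_isMaxOn_Icc hu) (sep_subset _ _)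
  have hqmem : q ∈ {s ∈ Icc q b | IsMaxOn u (Icc s b) s} := ⟨left_mem_Icc.2 hqb, hq⟩
  obtain ⟨p, ⟨hp, hpmax⟩, hpmin⟩ := hcompact.exists_isMinOn ⟨q, hqmem⟩ (hf.mono (sep_subset _ _))
  suffices hpb : p = b from hpb ▸ hpmin hqmem
  by_contra hne
  have hpb : p < b := hp.2.lt_of_ne hne
  obtain ⟨s, hs, hsmax, hfs⟩ : ∃ s ∈ Ioc p b, IsMaxOn u (Icc s b) s ∧ f s < f p := by
    by_cases hstrict : ∀ r ∈ Ioc p b, u r < u p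
    · obtain ⟨d, hpd, hd⟩ := (mem_nhdsGT_iff_exists_Ioo_subset' hpb).1 (hdecr p ⟨hp.1, hpb⟩ hpmax)
      obtain ⟨s, hs, hsmax⟩ := exists_isMaxOn_Icc_mem_Ioo (lt_min hpd hpb) (min_le_right d b)
        (hu.mono (Icc_subset_Icc_left hp.1)) hstrict
      exact ⟨s, ⟨hs.1, hs.2.le.trans (min_le_right d b)⟩, hsmax,
        hd ⟨hs.1, hs.2.trans_le (min_le_left d b)⟩⟩
    · push Not at hstrict
      obtain ⟨r, hr, hpr⟩ := hstrict
      have hur : u r = u p := (hpmax ⟨hr.1.le, hr.2⟩).antisymm hpr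
      exact ⟨r, hr, fun z hz => (hpmax ⟨hr.1.le.trans hz.1, hz.2⟩).trans hpr,
        hlevel p ⟨hp.1, hpb⟩ hpmax r hr hur⟩
  exact (hpmin ⟨⟨hp.1.trans hs.1.le, hs.2⟩, hsmax⟩).not_gt hfs

theorem le_of_hasDerivWithinAt_nonpos_of_isMaxOn_Icc (hqb : q ≤ b)
    (hu : ContinuousOn u (Icc q b)) (hf : ContinuousOn f (Icc q b)) (hq : IsMaxOn u (Icc q b) q)
    (hderiv : ∀ s ∈ Ico q b, IsMaxOn u (Icc s b) s →
      HasDerivWithinAt f (f' s) (Ioi s) s ∧ f' s ≤ 0)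
    (hlevel : ∀ s ∈ Ico q b, IsMaxOn u (Icc s b) s → ∀ r ∈ Ioc s b, u r = u s → f r ≤ f s) :
    f b ≤ f q := by
  -- Subtracting `ε * s` makes both hypotheses strict.
  have hperturb : ∀ ε > 0, f b - ε * b ≤ f q - ε * q := fun ε hε => by
    refine le_of_eventually_lt_of_isMaxOn_Icc (f := fun s => f s - ε * s) hqb hu
      (hf.sub (by fun_prop)) hq (fun s hs hmax => ?_) fun s hs hmax r hr hur => ?_
    · obtain ⟨hd, hnonpos⟩ := hderiv s hs hmax
      exact eventually_lt_of_hasDerivWithinAt_neg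
        (hd.sub ((hasDerivWithinAt_id s _).const_mul ε)) (by linarith)
    · have := hlevel s hs hmax r hr hur
      have := mul_lt_mul_of_pos_left hr.1 hε
      linarith
  have hlim (s : ℝ) : Tendsto (fun ε => f s - ε * s) (𝓝[>] 0) (𝓝 (f s)) := by
    have hcont : Continuous fun ε : ℝ => f s - ε * s := by fun_prop
    simpa using hcont.continuousWithinAt.tendsto (x := 0) (s := Ioi 0)
  exact le_of_tendsto_of_tendsto (hlim b) (hlim q) (by
    filter_upwards [self_mem_nhdsWithin] with ε hε using hperturb ε hε)

end RightMaxima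

/-- A function `u` on `[0, b]`, with first and second derivatives `v` and `w` inside, that lies
above its common end value in `(0, b)` and increases up to its first maximum, attained at `a`. The
one-sided derivatives of `u` at the end points are represented by the continuous extension `v`. -/
structure IsHump (u v w : ℝ → ℝ) (a b : ℝ) : Prop where
  mem_Ioo : a ∈ Ioo 0 b
  continuousOn : ContinuousOn u (Icc 0 b)
  continuousOn_deriv : ContinuousOn v (Icc 0 b)
  hasDerivAt : ∀ t ∈ Ioo 0 b, HasDerivAt u (v t) t
  hasDerivAt_deriv : ∀ t ∈ Ioo 0 b, HasDerivAt v (w t) t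
  right_eq_left : u b = u 0
  left_lt : ∀ t ∈ Ioo 0 b, u 0 < u t
  isMaxOn : IsMaxOn u (Icc 0 b) a
  deriv_pos : ∀ t ∈ Ioo 0 a, 0 < v t

/-- The point of `[0, a]` at which `u` takes the value `u s`, for comparing `s` with the increasing
branch of `u`; an arbitrary point if there is none. -/
noncomputable def leftPoint (u : ℝ → ℝ) (a s : ℝ) : ℝ := invFunOn u (Icc 0 a) (u s)

/-- The difference between the squared slopes `v ^ 2` at `s` and at the point of `[0, a]` on the
same level of `u`: twice the difference of the kinetic energies there. -/
noncomputable def energyDefect (u v : ℝ → ℝ) (a s : ℝ) : ℝ := v s ^ 2 - v (leftPoint u a s) ^ 2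

namespace IsHump

variable {u v w : ℝ → ℝ} {a b c m s t : ℝ}

theorem strictMonoOn (h : IsHump u v w a b) : StrictMonoOn u (Icc 0 a) := by
  refine strictMonoOn_of_hasDerivWithinAt_pos (f' := v) (convex_Icc 0 a)
    (h.continuousOn.mono (Icc_subset_Icc_right h.mem_Ioo.2.le)) ?_ ?_ <;> rw [interior_Icc]
  · exact fun s hs => (h.hasDerivAt s ⟨hs.1, hs.2.trans h.mem_Ioo.2⟩).hasDerivWithinAt
  · exact h.deriv_pos

theorem left_le (h : IsHump u v w a b) (hs : s ∈ Icc 0 b) : u 0 ≤ u s := by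
  rcases hs.1.eq_or_lt with rfl | hs0
  · exact le_rfl
  rcases hs.2.eq_or_lt with rfl | hsb
  · exact h.right_eq_left.ge
  exact (h.left_lt s ⟨hs0, hsb⟩).le

theorem mem_image (h : IsHump u v w a b) (hs : s ∈ Icc 0 b) : u s ∈ u '' Icc 0 a :=
  intermediate_value_Icc h.mem_Ioo.1.le
    (h.continuousOn.mono (Icc_subset_Icc_right h.mem_Ioo.2.le)) ⟨h.left_le hs, h.isMaxOn hs⟩

theorem leftPoint_mem_Icc (h : IsHump u v w a b) (hs : s ∈ Icc 0 b) : leftPoint u a s ∈ Icc 0 a :=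
  invFunOn_mem (h.mem_image hs)

theorem apply_leftPoint (h : IsHump u v w a b) (hs : s ∈ Icc 0 b) : u (leftPoint u a s) = u s :=
  invFunOn_eq (h.mem_image hs)

theorem leftPoint_eq (h : IsHump u v w a b) (ht : t ∈ Icc 0 a) (hst : u s = u t) :
    leftPoint u a s = t := by
  rw [leftPoint, hst]
  exact h.strictMonoOn.injOn.leftInvOn_invFunOn ht

theorem leftPoint_right (h : IsHump u v w a b) : leftPoint u a b = 0 :=
  h.leftPoint_eq (left_mem_Icc.2 h.mem_Ioo.1.le) h.right_eq_left

theorem leftPoint_le (h : IsHump u v w a b) (hs : s ∈ Icc 0 b) : leftPoint u a s ≤ s := by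
  rcases le_total s a with hsa | has
  · exact (h.leftPoint_eq ⟨hs.1, hsa⟩ rfl).le
  · exact (h.leftPoint_mem_Icc hs).2.trans has

theorem leftPoint_mem_Ioo (h : IsHump u v w a b) (hs : s ∈ Ioo 0 b) (hlt : u s < u a) :
    leftPoint u a s ∈ Ioo 0 a := by
  have hmem := h.leftPoint_mem_Icc (Ioo_subset_Icc_self hs)
  have hval := h.apply_leftPoint (Ioo_subset_Icc_self hs)
  refine ⟨hmem.1.lt_of_ne fun h0 => ?_, hmem.2.lt_of_ne fun ha => ?_⟩
  · exact (h.left_lt s hs).ne (h0 ▸ hval)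
  · exact hlt.ne' (ha ▸ hval)

theorem deriv_leftPoint_pos (h : IsHump u v w a b) (hs : s ∈ Ioo 0 b) (hlt : u s < u a) :
    0 < v (leftPoint u a s) :=
  h.deriv_pos _ (h.leftPoint_mem_Ioo hs hlt)

theorem continuousOn_invFunOn (h : IsHump u v w a b) :
    ContinuousOn (invFunOn u (Icc 0 a)) (u '' Icc 0 a) :=
  continuousOn_image_of_leftInvOn isCompact_Icc
    (h.continuousOn.mono (Icc_subset_Icc_right h.mem_Ioo.2.le))
    h.strictMonoOn.injOn.leftInvOn_invFunOn

theorem continuousOn_leftPoint (h : IsHump u v w a b) :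
    ContinuousOn (leftPoint u a) (Icc 0 b) :=
  h.continuousOn_invFunOn.comp h.continuousOn fun _ hs => h.mem_image hs

theorem hasDerivAt_leftPoint (h : IsHump u v w a b) (hs : s ∈ Ioo 0 b) (hlt : u s < u a) :
    HasDerivAt (leftPoint u a) ((v (leftPoint u a s))⁻¹ * v s) s := by
  have hmem := h.leftPoint_mem_Ioo hs hlt
  have himage : u '' Icc 0 a ∈ 𝓝 (u s) :=
    mem_of_superset (Icc_mem_nhds (h.left_lt s hs) hlt)
      (intermediate_value_Icc h.mem_Ioo.1.le
        (h.continuousOn.mono (Icc_subset_Icc_right h.mem_Ioo.2.le)))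
  have hinv : HasDerivAt (invFunOn u (Icc 0 a)) (v (leftPoint u a s))⁻¹ (u s) := by
    refine HasDerivAt.of_local_left_inverse (h.continuousOn_invFunOn.continuousAt himage)
      (h.hasDerivAt _ ⟨hmem.1, hmem.2.trans h.mem_Ioo.2⟩) (h.deriv_leftPoint_pos hs hlt).ne' ?_
    filter_upwards [himage] with y hy using invFunOn_eq hy
  exact hinv.comp s (h.hasDerivAt s hs)

theorem continuousOn_energyDefect (h : IsHump u v w a b) :
    ContinuousOn (energyDefect u v a) (Icc 0 b) :=
  (h.continuousOn_deriv.pow 2).sub <|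
    (h.continuousOn_deriv.comp h.continuousOn_leftPoint fun _ hs =>
      Icc_subset_Icc_right h.mem_Ioo.2.le (h.leftPoint_mem_Icc hs)).pow 2

theorem hasDerivAt_energyDefect (h : IsHump u v w a b) (hs : s ∈ Ioo 0 b) (hlt : u s < u a) :
    HasDerivAt (energyDefect u v a) (2 * v s * (w s - w (leftPoint u a s))) s := by
  have hmem := h.leftPoint_mem_Ioo hs hlt
  have hleft := (h.hasDerivAt_deriv _ ⟨hmem.1, hmem.2.trans h.mem_Ioo.2⟩).comp s
    (h.hasDerivAt_leftPoint hs hlt)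
  refine (((h.hasDerivAt_deriv s hs).pow 2).sub (hleft.pow 2)).congr_deriv ?_
  have := (h.deriv_leftPoint_pos hs hlt).ne'
  simp only [comp_apply]
  field_simp
  ring

theorem deriv_eq_zero_of_eq_max (h : IsHump u v w a b) (hs : s ∈ Ioo 0 b) (hmax : u s = u a) :
    v s = 0 :=
  have hs_max : IsMaxOn u (Icc 0 b) s := fun _ hz => (h.isMaxOn hz).trans hmax.ge
  (hs_max.isLocalMax (Icc_mem_nhds hs.1 hs.2)).hasDerivAt_eq_zero (h.hasDerivAt s hs)

theorem energyDefect_eq_zero_of_eq_max (h : IsHump u v w a b) (hs : s ∈ Ioo 0 b)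
    (hmax : u s = u a) : energyDefect u v a s = 0 := by
  rw [energyDefect, h.leftPoint_eq (right_mem_Icc.2 h.mem_Ioo.1.le) hmax,
    h.deriv_eq_zero_of_eq_max hs hmax, h.deriv_eq_zero_of_eq_max h.mem_Ioo rfl, sub_self]

theorem energyDefect_neg_of_deriv_eq_zero (h : IsHump u v w a b) (hs : s ∈ Ioo 0 b)
    (hlt : u s < u a) (hcrit : v s = 0) : energyDefect u v a s < 0 := by
  have := pow_pos (h.deriv_leftPoint_pos hs hlt) 2
  rw [energyDefect, hcrit]
  linarith

theorem energyDefect_right_nonneg (h : IsHump u v w a b) (hend : |v 0| ≤ |v b|) :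
    0 ≤ energyDefect u v a b := by
  rw [energyDefect, h.leftPoint_right]
  exact sub_nonneg.2 (sq_le_sq.2 hend)

theorem deriv2_leftPoint_le (h : IsHump u v w a b)
    (hw : ∀ y, MonotoneOn w (Ioo 0 b ∩ u ⁻¹' {y})) (hs : s ∈ Ioo 0 b) (hlt : u s < u a) :
    w (leftPoint u a s) ≤ w s :=
  have hmem := h.leftPoint_mem_Ioo hs hlt
  have hsI := Ioo_subset_Icc_self hs
  hw (u s) ⟨⟨hmem.1, hmem.2.trans h.mem_Ioo.2⟩, h.apply_leftPoint hsI⟩ ⟨hs, rfl⟩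
    (h.leftPoint_le hsI)

theorem deriv_energyDefect_nonpos (h : IsHump u v w a b)
    (hw : ∀ y, MonotoneOn w (Ioo 0 b ∩ u ⁻¹' {y})) (hs : s ∈ Ioo 0 b) (hlt : u s < u a)
    (hvs : v s ≤ 0) : 2 * v s * (w s - w (leftPoint u a s)) ≤ 0 :=
  mul_nonpos_of_nonpos_of_nonneg (by linarith) (sub_nonneg.2 (h.deriv2_leftPoint_le hw hs hlt))

theorem energyDefect_nonneg_of_isMaxOn_Icc (h : IsHump u v w a b) (hend : |v 0| ≤ |v b|)
    (hw : ∀ y, MonotoneOn w (Ioo 0 b ∩ u ⁻¹' {y})) (hs : s ∈ Ioo 0 b) (hlt : u s < u a)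
    (hmax : IsMaxOn u (Icc s b) s) : 0 ≤ energyDefect u v a s := by
  have hsub : Icc s b ⊆ Icc 0 b := Icc_subset_Icc_left hs.1.le
  refine (h.energyDefect_right_nonneg hend).trans <|
    le_of_hasDerivWithinAt_nonpos_of_isMaxOn_Icc (u := u)
      (f' := fun r => 2 * v r * (w r - w (leftPoint u a r))) hs.2.le (h.continuousOn.mono hsub)
      (h.continuousOn_energyDefect.mono hsub) hmax (fun p hp hpmax => ?_)
      fun p hp hpmax r hr hrp => ?_
  · have hp0 : p ∈ Ioo 0 b := ⟨hs.1.trans_le hp.1, hp.2⟩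
    have hpa : u p < u a := (hmax ⟨hp.1, hp.2.le⟩).trans_lt hlt
    have hvp : v p ≤ 0 :=
      nonpos_of_hasDerivWithinAt_of_isMaxOn (h.hasDerivAt p hp0).hasDerivWithinAt hp.2 hpmax
    exact ⟨(h.hasDerivAt_energyDefect hp0 hpa).hasDerivWithinAt,
      h.deriv_energyDefect_nonpos hw hp0 hpa hvp⟩
  · have hp0 : p ∈ Ioo 0 b := ⟨hs.1.trans_le hp.1, hp.2⟩
    have hrb : r < b := hr.2.lt_of_ne fun hrb =>
      (h.left_lt p hp0).ne' (by rw [← hrp, hrb, h.right_eq_left])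
    have hrmax : IsMaxOn u (Icc p b) r := fun z hz => (hpmax hz).trans hrp.ge
    have hvr : v r = 0 := (hrmax.isLocalMax (Icc_mem_nhds hr.1 hrb)).hasDerivAt_eq_zero
      (h.hasDerivAt r ⟨hp0.1.trans hr.1, hrb⟩)
    simp only [energyDefect, leftPoint, hrp, hvr]
    exact sub_le_sub_right (by simpa using sq_nonneg (v p)) _

theorem deriv_neg_of_forall_lt_max (h : IsHump u v w a b) (hend : |v 0| ≤ |v b|)
    (hw : ∀ y, MonotoneOn w (Ioo 0 b ∩ u ⁻¹' {y})) (hs : s ∈ Ioo 0 b)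
    (hlt : ∀ r ∈ Icc s b, u r < u a) : v s < 0 := by
  by_contra! hvs
  obtain ⟨q, hq, hqmax⟩ := isCompact_Icc.exists_isMaxOn (nonempty_Icc.2 hs.2.le)
    (h.continuousOn.mono (Icc_subset_Icc_left hs.1.le))
  have hqb : q < b := hq.2.lt_of_ne fun hqb =>
    (h.left_lt s hs).not_ge (h.right_eq_left ▸ hqb ▸ hqmax (left_mem_Icc.2 hs.2.le))
  have hq0 : q ∈ Ioo 0 b := ⟨hs.1.trans_le hq.1, hqb⟩
  have hvq : v q = 0 := by
    rcases hq.1.eq_or_lt with rfl | hsq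
    · exact (nonpos_of_hasDerivWithinAt_of_isMaxOn
        (h.hasDerivAt s hs).hasDerivWithinAt hqb hqmax).antisymm hvs
    · exact (hqmax.isLocalMax (Icc_mem_nhds hsq hqb)).hasDerivAt_eq_zero (h.hasDerivAt q hq0)
  exact (h.energyDefect_neg_of_deriv_eq_zero hq0 (hlt q hq) hvq).not_ge <|
    h.energyDefect_nonneg_of_isMaxOn_Icc hend hw hq0 (hlt q hq)
      (hqmax.on_subset (Icc_subset_Icc_left hq.1))

theorem exists_isGreatest_max (h : IsHump u v w a b) (hm : m ∈ Icc a b) :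
    ∃ c, IsGreatest (Icc a m ∩ u ⁻¹' {u a}) c := by
  have hclosed : IsClosed (Icc a m ∩ u ⁻¹' {u a}) :=
    (h.continuousOn.mono (Icc_subset_Icc h.mem_Ioo.1.le hm.2)).preimage_isClosed_of_isClosed
      isClosed_Icc isClosed_singleton
  exact (isCompact_Icc.of_isClosed_subset hclosed inter_subset_left).exists_isGreatest
    ⟨a, left_mem_Icc.2 hm.1, rfl⟩

theorem lt_max_of_isGreatest (h : IsHump u v w a b)
    (hc : IsGreatest (Icc a m ∩ u ⁻¹' {u a}) c) (hmb : m ≤ b) (hs : s ∈ Ioc c m) : u s < u a := by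
  have has : a ≤ s := hc.1.1.1.trans hs.1.le
  exact (h.isMaxOn ⟨h.mem_Ioo.1.le.trans has, hs.2.trans hmb⟩).lt_of_ne fun hmax =>
    (hc.2 ⟨⟨has, hs.2⟩, hmax⟩).not_gt hs.1

theorem last_max_mem_Ioo (h : IsHump u v w a b) (hc : IsGreatest (Icc a b ∩ u ⁻¹' {u a}) c) :
    c ∈ Ioo 0 b := by
  refine ⟨h.mem_Ioo.1.trans_le hc.1.1.1, hc.1.1.2.lt_of_ne fun hcb => ?_⟩
  have hca : u c = u a := hc.1.2
  exact (h.left_lt a h.mem_Ioo).ne (by rw [← hca, hcb, h.right_eq_left])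

theorem deriv_neg_right_of_last_max (h : IsHump u v w a b)
    (hend : |v 0| ≤ |v b|) (hw : ∀ y, MonotoneOn w (Ioo 0 b ∩ u ⁻¹' {y}))
    (hc : IsGreatest (Icc a b ∩ u ⁻¹' {u a}) c) (hs : s ∈ Ioo c b) : v s < 0 :=
  h.deriv_neg_of_forall_lt_max hend hw (Ioo_subset_Ioo_left (h.last_max_mem_Ioo hc).1.le hs)
    fun _ hr => h.lt_max_of_isGreatest hc le_rfl ⟨hs.1.trans_le hr.1, hr.2⟩

theorem energyDefect_eq_zero_right_of_last_max (h : IsHump u v w a b)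
    (hend : |v 0| ≤ |v b|) (hw : ∀ y, MonotoneOn w (Ioo 0 b ∩ u ⁻¹' {y}))
    (hc : IsGreatest (Icc a b ∩ u ⁻¹' {u a}) c) (hs : s ∈ Icc c b) :
    energyDefect u v a s = 0 := by
  have hc0 := h.last_max_mem_Ioo hc
  have hsub : Ioo c b ⊆ Ioo 0 b := Ioo_subset_Ioo_left hc0.1.le
  have hlt : ∀ r ∈ Ioo c b, u r < u a := fun _ hr =>
    h.lt_max_of_isGreatest hc le_rfl (Ioo_subset_Ioc_self hr)
  have hanti : AntitoneOn (energyDefect u v a) (Icc c b) := by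
    refine antitoneOn_of_hasDerivWithinAt_nonpos
      (f' := fun r => 2 * v r * (w r - w (leftPoint u a r))) (convex_Icc c b)
      (h.continuousOn_energyDefect.mono (Icc_subset_Icc_left hc0.1.le)) ?_ ?_ <;>
      rw [interior_Icc] <;> intro r hr
    · exact (h.hasDerivAt_energyDefect (hsub hr) (hlt r hr)).hasDerivWithinAt
    · exact h.deriv_energyDefect_nonpos hw (hsub hr) (hlt r hr)
        (h.deriv_neg_right_of_last_max hend hw hc hr).le
  refine le_antisymm ?_ ?_
  · exact (hanti (left_mem_Icc.2 hc0.2.le) hs hs.1).trans_eq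
      (h.energyDefect_eq_zero_of_eq_max hc0 hc.1.2)
  · exact (h.energyDefect_right_nonneg hend).trans (hanti hs (right_mem_Icc.2 hc0.2.le) hs.2)

theorem deriv2_eq_deriv2_leftPoint_right_of_last_max (h : IsHump u v w a b)
    (hend : |v 0| ≤ |v b|) (hw : ∀ y, MonotoneOn w (Ioo 0 b ∩ u ⁻¹' {y}))
    (hc : IsGreatest (Icc a b ∩ u ⁻¹' {u a}) c) (hs : s ∈ Ioo c b) :
    w s = w (leftPoint u a s) := by
  have hconst : HasDerivAt (energyDefect u v a) 0 s := by
    refine (hasDerivAt_const s (0 : ℝ)).congr_of_eventuallyEq ?_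
    filter_upwards [Icc_mem_nhds hs.1 hs.2] with z hz
      using h.energyDefect_eq_zero_right_of_last_max hend hw hc hz
  have hzero := (h.hasDerivAt_energyDefect (Ioo_subset_Ioo_left (h.last_max_mem_Ioo hc).1.le hs)
    (h.lt_max_of_isGreatest hc le_rfl (Ioo_subset_Ioc_self hs))).unique hconst
  have hvs := (h.deriv_neg_right_of_last_max hend hw hc hs).ne
  exact sub_eq_zero.1 ((mul_eq_zero.1 hzero).resolve_left (mul_ne_zero two_ne_zero hvs))

theorem deriv2_eq_deriv2_leftPoint_left_of_last_max (h : IsHump u v w a b)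
    (hend : |v 0| ≤ |v b|) (hw : ∀ y, MonotoneOn w (Ioo 0 b ∩ u ⁻¹' {y}))
    (hc : IsGreatest (Icc a b ∩ u ⁻¹' {u a}) c) (hs : s ∈ Ioo 0 c) (hlt : u s < u a) :
    w s = w (leftPoint u a s) := by
  have hc0 := h.last_max_mem_Ioo hc
  have hs0 : s ∈ Ioo 0 b := Ioo_subset_Ioo_right hc0.2.le hs
  have hca : u c = u a := hc.1.2
  obtain ⟨r, hr, hrs⟩ := intermediate_value_Ioo' hc0.2.le
    (h.continuousOn.mono (Icc_subset_Icc_left hc0.1.le))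
    ⟨h.right_eq_left.trans_lt (h.left_lt s hs0), hlt.trans_eq hca.symm⟩
  refine le_antisymm ?_ (h.deriv2_leftPoint_le hw hs0 hlt)
  calc w s ≤ w r := hw (u s) ⟨hs0, rfl⟩ ⟨⟨hc0.1.trans hr.1, hr.2⟩, hrs⟩ (hs.2.trans hr.1).le
    _ = w (leftPoint u a r) := h.deriv2_eq_deriv2_leftPoint_right_of_last_max hend hw hc hr
    _ = w (leftPoint u a s) := by rw [leftPoint, leftPoint, hrs]

theorem energyDefect_eq_zero_left_of_last_max (h : IsHump u v w a b)
    (hend : |v 0| ≤ |v b|) (hw : ∀ y, MonotoneOn w (Ioo 0 b ∩ u ⁻¹' {y}))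
    (hc : IsGreatest (Icc a b ∩ u ⁻¹' {u a}) c) (hm : m ∈ Icc a c) : energyDefect u v a m = 0 := by
  have hcb := (h.last_max_mem_Ioo hc).2
  have hmb : m < b := hm.2.trans_lt hcb
  obtain ⟨l, hl⟩ := h.exists_isGreatest_max ⟨hm.1, hmb.le⟩
  have hlm : l ≤ m := hl.1.1.2
  have hl0 : 0 < l := h.mem_Ioo.1.trans_le hl.1.1.1
  have hconst : energyDefect u v a l = energyDefect u v a m := by
    refine eq_of_hasDerivAt_zero hlm
      (h.continuousOn_energyDefect.mono (Icc_subset_Icc hl0.le hmb.le)) fun r hr => ?_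
    have hrlt := h.lt_max_of_isGreatest hl hmb.le (Ioo_subset_Ioc_self hr)
    have hr0 : r ∈ Ioo 0 c := ⟨hl0.trans hr.1, hr.2.trans_le hm.2⟩
    refine (h.hasDerivAt_energyDefect (Ioo_subset_Ioo_right hcb.le hr0) hrlt).congr_deriv ?_
    rw [h.deriv2_eq_deriv2_leftPoint_left_of_last_max hend hw hc hr0 hrlt, sub_self, mul_zero]
  rw [← hconst]
  exact h.energyDefect_eq_zero_of_eq_max ⟨hl0, hlm.trans_lt hmb⟩ hl.1.2

theorem eq_max_left_of_last_max (h : IsHump u v w a b)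
    (hend : |v 0| ≤ |v b|) (hw : ∀ y, MonotoneOn w (Ioo 0 b ∩ u ⁻¹' {y}))
    (hc : IsGreatest (Icc a b ∩ u ⁻¹' {u a}) c) (ht : t ∈ Icc a c) : u t = u a := by
  have hcb := (h.last_max_mem_Ioo hc).2
  have hca : u c = u a := hc.1.2
  have hsub : Icc a c ⊆ Icc 0 b := Icc_subset_Icc h.mem_Ioo.1.le hcb.le
  obtain ⟨m, hm, hmin⟩ := isCompact_Icc.exists_isMinOn ⟨t, ht⟩ (h.continuousOn.mono hsub)
  suffices hma : u m = u a from (h.isMaxOn (hsub ht)).antisymm (hma ▸ hmin ht)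
  by_contra hne
  have hm0 : m ∈ Ioo 0 b := ⟨h.mem_Ioo.1.trans_le hm.1, hm.2.trans_lt hcb⟩
  have hm_inner : m ∈ Ioo a c :=
    ⟨hm.1.lt_of_ne fun ham => hne (by rw [ham]), hm.2.lt_of_ne fun hmc => hne (by rw [hmc, hca])⟩
  have hvm : v m = 0 := (hmin.isLocalMin (Icc_mem_nhds hm_inner.1 hm_inner.2)).hasDerivAt_eq_zero
    (h.hasDerivAt m hm0)
  exact (h.energyDefect_neg_of_deriv_eq_zero hm0 ((h.isMaxOn (hsub hm)).lt_of_ne hne) hvm).ne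
    (h.energyDefect_eq_zero_left_of_last_max hend hw hc hm)

theorem leftPoint_eq_sub_of_last_max (h : IsHump u v w a b)
    (hend : |v 0| ≤ |v b|) (hw : ∀ y, MonotoneOn w (Ioo 0 b ∩ u ⁻¹' {y}))
    (hc : IsGreatest (Icc a b ∩ u ⁻¹' {u a}) c) (hs : s ∈ Icc c b) : leftPoint u a s = b - s := by
  have hc0 := (h.last_max_mem_Ioo hc).1
  have hsum : s + leftPoint u a s = b + leftPoint u a b := by
    refine eq_of_hasDerivAt_zero (f := fun r => r + leftPoint u a r) hs.2 (continuousOn_id.add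
      (h.continuousOn_leftPoint.mono (Icc_subset_Icc_left (hc0.le.trans hs.1)))) fun r hr => ?_
    have hrc : r ∈ Ioo c b := Ioo_subset_Ioo_left hs.1 hr
    have hr0 : r ∈ Ioo 0 b := Ioo_subset_Ioo_left hc0.le hrc
    have hlt := h.lt_max_of_isGreatest hc le_rfl (Ioo_subset_Ioc_self hrc)
    have hpos := h.deriv_leftPoint_pos hr0 hlt
    have hopp : v r = -v (leftPoint u a r) := by
      have hsq : v r ^ 2 = v (leftPoint u a r) ^ 2 := sub_eq_zero.1 <|
        h.energyDefect_eq_zero_right_of_last_max hend hw hc (Ioo_subset_Icc_self hrc)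
      have hneg := h.deriv_neg_right_of_last_max hend hw hc hrc
      exact (sq_eq_sq_iff_eq_or_eq_neg.1 hsq).resolve_left (hneg.trans hpos).ne
    refine ((hasDerivAt_id r).add (h.hasDerivAt_leftPoint hr0 hlt)).congr_deriv ?_
    rw [hopp, mul_neg, inv_mul_cancel₀ hpos.ne', add_neg_cancel]
  rw [h.leftPoint_right] at hsum
  linarith

end IsHump

theorem stmt_9_general {u v w : ℝ → ℝ} {a b : ℝ} (h : IsHump u v w a b) (hend : |v 0| ≤ |v b|)
    (hw : ∀ y, MonotoneOn w (Ioo 0 b ∩ u ⁻¹' {y})) :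
    (∀ t ∈ Icc 0 b, u t = u (b - t)) ∧ ∀ t ∈ Icc a (b - a), u t = u a := by
  obtain ⟨c, hc⟩ := h.exists_isGreatest_max (right_mem_Icc.2 h.mem_Ioo.2.le)
  have hcb := h.last_max_mem_Ioo hc
  have hreflect : ∀ s ∈ Icc c b, leftPoint u a s = b - s := fun _ hs =>
    h.leftPoint_eq_sub_of_last_max hend hw hc hs
  have hc_eq : c = b - a := by
    have hca := h.leftPoint_eq (right_mem_Icc.2 h.mem_Ioo.1.le) hc.1.2
    rw [hreflect c (left_mem_Icc.2 hcb.2.le)] at hca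
    linarith
  have hplateau : ∀ t ∈ Icc a c, u t = u a := fun _ ht => h.eq_max_left_of_last_max hend hw hc ht
  have hright : ∀ s ∈ Icc c b, u s = u (b - s) := fun s hs => by
    rw [← hreflect s hs, h.apply_leftPoint (Icc_subset_Icc_left hcb.1.le hs)]
  refine ⟨fun t ht => ?_, hc_eq ▸ hplateau⟩
  rcases le_total c t with hct | htc
  · exact hright t ⟨hct, ht.2⟩
  rcases le_total a t with hat | hta
  · rw [hplateau t ⟨hat, htc⟩, hplateau (b - t) ⟨by linarith, by linarith⟩]
  · rw [hright (b - t) ⟨by linarith, by linarith [ht.1]⟩, sub_sub_cancel]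

theorem isHump_of_contDiffOn {u : ℝ → ℝ} {a b : ℝ} (ha : a ∈ Ioo 0 b)
    (hu2 : ContDiffOn ℝ 2 u (Ioo 0 b)) (hu1 : ContDiffOn ℝ 1 u (Icc 0 b)) (hub : u b = u 0)
    (hleft : ∀ t ∈ Ioo 0 b, u 0 < u t) (hmax : IsMaxOn u (Icc 0 b) a)
    (hu' : ∀ t ∈ Ioo 0 a, 0 < deriv u t) :
    IsHump u (derivWithin u (Icc 0 b)) (deriv (deriv u)) a b := by
  have hderiv : ∀ t ∈ Ioo 0 b, derivWithin u (Icc 0 b) t = deriv u t := fun t ht =>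
    derivWithin_of_mem_nhds (Icc_mem_nhds ht.1 ht.2)
  refine ⟨ha, hu1.continuousOn,
    hu1.continuousOn_derivWithin (uniqueDiffOn_Icc (ha.1.trans ha.2)) le_rfl,
    fun t ht => ?_, fun t ht => ?_, hub, hleft, hmax, fun t ht => ?_⟩
  · rw [hderiv t ht]
    exact ((hu2.differentiableOn two_ne_zero).differentiableAt (isOpen_Ioo.mem_nhds ht)).hasDerivAt
  · have hdiff : DifferentiableOn ℝ (deriv u) (Ioo 0 b) :=
      (hu2.deriv_of_isOpen (m := 1) isOpen_Ioo (by norm_num)).differentiableOn one_ne_zero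
    refine (hdiff.differentiableAt (isOpen_Ioo.mem_nhds ht)).hasDerivAt.congr_of_eventuallyEq ?_
    filter_upwards [isOpen_Ioo.mem_nhds ht] with z hz using hderiv z hz
  · rw [hderiv t ⟨ht.1, ht.2.trans ha.2⟩]
    exact hu' t ht

/-- Theorem 4.1 of Li–Nirenberg. -/
theorem stmt_9 (b : ℝ) (hb : 0 < b) (u : ℝ → ℝ)
    (hpos : ∀ t ∈ Set.Ioo 0 b, 0 < u t)
    (hu2 : ContDiffOn ℝ 2 u (Set.Ioo 0 b)) (hu1 : ContDiffOn ℝ 1 u (Set.Icc 0 b))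
    (hu0 : u 0 = 0) (hu'0 : derivWithin u (Set.Icc 0 b) 0 = 0) (hub : u b = 0)
    (a : ℝ) (ha : a ∈ Set.Ioo 0 b)
    (hamax : ∀ t ∈ Set.Icc 0 b, u t ≤ u a)
    (hafirst : ∀ t : ℝ, 0 ≤ t → t < a → u t < u a)
    (hu' : ∀ t ∈ Set.Ioo 0 a, 0 < deriv u t)
    (hmain : ∀ t s : ℝ, 0 < t → t < s → s < b → u t = u s →
      deriv (deriv u) t ≤ deriv (deriv u) s) :
    (∀ t ∈ Set.Icc 0 b, u t = u (b - t)) ∧ ∀ t ∈ Set.Icc a (b - a), u t = u a := by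
  have h : IsHump u (derivWithin u (Icc 0 b)) (deriv (deriv u)) a b :=
    isHump_of_contDiffOn ha hu2 hu1 (hub.trans hu0.symm) (by rwa [hu0]) hamax hu'
  exact stmt_9_general h (by simp [hu'0]) fun y t ht s hs hts => hts.eq_or_lt.elim
    (fun heq => by rw [heq]) fun hlt => hmain t s ht.1.1 hlt hs.1.2 (ht.2.trans hs.2.symm)
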